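/- Let M be a complete pointed metric space such that for every compact K ⊂ M containing 0 and every WUC series Σ_n f_n in Lip_0(K) there exists a WUC series Σ_n g_n in Lip_0(M) with g_n restricted to K equal to f_n for every n. Then property (V*) is compactly determined for F(M): if F(K∪{0}) has property (V*) for every compact K ⊂ M, then F(M) has property (V*). -/

import Mathlib

open Filter Topology Metric Set

noncomputable section

/-- A formal series `∑ yₙ` in a normed space `Y` is weakly unconditionally Cauchy (WUC)
if `∑ |⟨φ, yₙ⟩| < ∞` for every continuous linear functional `φ` on `Y`. -/
def IsWUC {Y : Type*} [SeminormedAddCommGroup Y] [NormedSpace ℝ Y] (y : ℕ → Y) : Prop :=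
  ∀ φ : Y →L[ℝ] ℝ, Summable fun n => |φ (y n)|

/-- `Γ` is a (V*)-set in `X`: for every WUC series `∑ fₙ` in the dual `X*`,
`sup_{x ∈ Γ} |⟨x, fₙ⟩| → 0`. -/
def IsVStarSet {X : Type*} [SeminormedAddCommGroup X] [NormedSpace ℝ X] (Γ : Set X) : Prop :=
  ∀ f : ℕ → (X →L[ℝ] ℝ), IsWUC f →
    ∀ ε > (0 : ℝ), ∀ᶠ n in atTop, ∀ x ∈ Γ, |f n x| ≤ ε

/-- `Γ` is relatively weakly compact: its closure in the weak topology is compact. -/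
def RelWeaklyCompact {X : Type*} [SeminormedAddCommGroup X] [NormedSpace ℝ X]
    (Γ : Set X) : Prop :=
  IsCompact (closure ((toWeakSpace ℝ X) '' Γ))

/-- A normed space has Pełczyński's property (V*) if every (V*)-set is relatively
weakly compact. -/
def HasPropertyVStar (X : Type*) [SeminormedAddCommGroup X] [NormedSpace ℝ X] : Prop :=
  ∀ Γ : Set X, IsVStarSet Γ → RelWeaklyCompact Γ

/-- `F`, together with the map `δ : M → F`, is (a realization of) the Lipschitz-free space
over the pointed metric space `(M, o)`: `δ` is a base-point-preserving isometric embedding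
whose range has dense linear span, and every Lipschitz function `f : M → ℝ` vanishing at
the base point lifts to a continuous linear functional of norm at most `Lip(f)` (this
characterizes `F(M)`, with dual `Lip₀(M)`, up to isometric isomorphism). -/
structure IsLipschitzFree {M : Type*} [MetricSpace M] (o : M)
    {F : Type*} [NormedAddCommGroup F] [NormedSpace ℝ F] (δ : M → F) : Prop where
  isometry : Isometry δ
  map_base : δ o = 0
  dense_span : Dense (Submodule.span ℝ (Set.range δ) : Set F)
  lift : ∀ (L : NNReal) (f : M → ℝ), LipschitzWith L f → f o = 0 →
    ∃ φ : F →L[ℝ] ℝ, ‖φ‖ ≤ L ∧ ∀ x, φ (δ x) = f x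

/-- The subspace of `F` corresponding to the Lipschitz-free space `F(S)` over a subset
`S ⊆ M`: the closed linear span of `δ(S)`. -/
def freeSpan {M : Type*} [MetricSpace M] {F : Type*} [NormedAddCommGroup F]
    [NormedSpace ℝ F] (δ : M → F) (S : Set M) : Submodule ℝ F :=
  (Submodule.span ℝ (δ '' S)).topologicalClosure

theorem mem_freeSpan {M : Type*} [MetricSpace M] {F : Type*} [NormedAddCommGroup F]
    [NormedSpace ℝ F] (δ : M → F) {S : Set M} {x : M} (hx : x ∈ S) :
    δ x ∈ freeSpan δ S :=
  (Submodule.span ℝ (δ '' S)).le_topologicalClosure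
    (Submodule.subset_span ⟨x, hx, rfl⟩)

/-!
Fix a (V*)-set `Γ` in `F(M)`. By Grothendieck's criterion, a set that can be approximated to within
every `ε > 0` by relatively weakly compact sets is itself relatively weakly compact, so it suffices
to approximate `Γ` to within `ε` by a (V*)-set `A` of some `F(K)` with `K` compact: the extension
hypothesis makes `A` a (V*)-set in `F(K)`, where property (V*) applies.

Multiplication by a Lipschitz cutoff around a finite set `E` is an operator on `F(M)`, provided that
the width of the cutoff is measured relative to `1 + d(·, 0)`. For any given relative width, some
`E` makes this operator move every point of `Γ` by at most `ε`. Otherwise, a gliding hump produces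
norming functionals of bounded norm whose Lipschitz functions have disjoint supports; these form a
WUC series that does not tend to `0` uniformly on `Γ`. Composing such operators with widths tending
to `0` and summable errors gives a limit supported on the cluster points of the successive
neighborhoods. By completeness of `M`, these form a compact set.
-/

section WUC

theorem IsWUC.exists_norm_le {Y : Type*} [SeminormedAddCommGroup Y] [NormedSpace ℝ Y] {y : ℕ → Y}
    (hy : IsWUC y) : ∃ C > 0, ∀ n, ‖y n‖ ≤ C := by
  have hpointwise : ∀ φ : Y →L[ℝ] ℝ,
      ∃ C, ∀ n, ‖NormedSpace.inclusionInDoubleDual ℝ Y (y n) φ‖ ≤ C := fun φ => by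
    obtain ⟨C, hC⟩ := (hy φ).tendsto_atTop_zero.bddAbove_range
    exact ⟨C, fun n => hC ⟨n, rfl⟩⟩
  obtain ⟨C, hC⟩ := banach_steinhaus hpointwise
  refine ⟨max C 1, by positivity, fun n => le_max_of_le_left ?_⟩
  exact ((NormedSpace.inclusionInDoubleDualLi ℝ).norm_map (y n)).symm.trans_le (hC n)

theorem isWUC_of_norm_sum_smul_le {Y : Type*} [SeminormedAddCommGroup Y] [NormedSpace ℝ Y]
    {y : ℕ → Y} {C : ℝ}
    (hC : ∀ (s : Finset ℕ) (σ : ℕ → ℝ), (∀ n, |σ n| ≤ 1) → ‖∑ n ∈ s, σ n • y n‖ ≤ C) :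
    IsWUC y := by
  intro φ
  have hsign : ∀ r : ℝ, |(SignType.sign r : ℝ)| ≤ 1 := fun r => by
    rcases lt_trichotomy r 0 with h | h | h <;> simp [h]
  refine summable_of_sum_le (c := ‖φ‖ * C) (fun _ => abs_nonneg _) fun s => ?_
  calc ∑ n ∈ s, |φ (y n)| = φ (∑ n ∈ s, (SignType.sign (φ (y n)) : ℝ) • y n) := by
        simp only [map_sum, map_smul, smul_eq_mul, sign_mul_self]
    _ ≤ ‖φ‖ * C := (le_abs_self _).trans (φ.le_opNorm_of_le (hC s _ fun n => hsign _))

end WUC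

theorem norm_sum_le_card_mul_of_support_subset {ι E : Type*} [SeminormedAddCommGroup E]
    {s t : Finset ι} {a : ι → E} {C : ℝ} (hC₀ : 0 ≤ C) (hC : ∀ i ∈ t, ‖a i‖ ≤ C)
    (ha : ∀ i ∈ s, a i ≠ 0 → i ∈ t) : ‖∑ i ∈ s, a i‖ ≤ t.card * C := by
  classical
  calc ‖∑ i ∈ s, a i‖ = ‖∑ i ∈ s with i ∈ t, a i‖ := by rw [Finset.sum_filter_of_ne ha]
    _ ≤ ∑ i ∈ s with i ∈ t, C := norm_sum_le_of_le _ fun i hi => hC i (Finset.mem_filter.1 hi).2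
    _ = (s.filter (· ∈ t)).card * C := by rw [Finset.sum_const, nsmul_eq_mul]
    _ ≤ t.card * C := by
        gcongr
        exact fun i hi => (Finset.mem_filter.1 hi).2

section VStarSet

variable {X : Type*} [SeminormedAddCommGroup X] [NormedSpace ℝ X]

theorem IsVStarSet.image {Y : Type*} [SeminormedAddCommGroup Y] [NormedSpace ℝ Y]
    {Γ : Set X} (hΓ : IsVStarSet Γ) (T : X →L[ℝ] Y) : IsVStarSet (T '' Γ) := by
  intro f hf ε hε
  have hfT : IsWUC fun n => (f n).comp T := fun φ =>
    hf (φ.comp ((ContinuousLinearMap.compL ℝ X Y ℝ).flip T))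
  simpa only [forall_mem_image] using! hΓ _ hfT ε hε

theorem IsVStarSet.of_approx {A : Set X}
    (hA : ∀ ε > 0, ∃ B : Set X, IsVStarSet B ∧ A ⊆ thickening ε B) : IsVStarSet A := by
  intro f hf ε hε
  obtain ⟨C, hC, hfC⟩ := hf.exists_norm_le
  obtain ⟨B, hB, hAB⟩ := hA (ε / 2 / C) (by positivity)
  filter_upwards [hB f hf (ε / 2) (half_pos hε)] with n hn a ha
  obtain ⟨b, hb, hab⟩ := mem_thickening_iff.1 (hAB ha)
  calc |f n a| = |f n (a - b) + f n b| := by rw [map_sub, sub_add_cancel]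
    _ ≤ |f n (a - b)| + |f n b| := abs_add_le _ _
    _ ≤ C * (ε / 2 / C) + ε / 2 := by
        gcongr
        · exact (f n).le_of_opNorm_le_of_le (hfC n) (dist_eq_norm a b ▸ hab.le)
        · exact hn b hb
    _ = ε := by rw [mul_div_cancel₀ _ hC.ne', add_halves]

theorem IsVStarSet.image_of_tendstoUniformlyOn {Y : Type*} [SeminormedAddCommGroup Y]
    [NormedSpace ℝ Y] {ι : Type*} {l : Filter ι} [l.NeBot] {Γ : Set X} (hΓ : IsVStarSet Γ)
    {T : ι → X →L[ℝ] Y} {p : X → Y} (hp : TendstoUniformlyOn (fun i => T i) p l Γ) :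
    IsVStarSet (p '' Γ) := by
  refine IsVStarSet.of_approx fun ε hε => ?_
  obtain ⟨i, hi⟩ := (Metric.tendstoUniformlyOn_iff.1 hp ε hε).exists
  refine ⟨T i '' Γ, hΓ.image (T i), ?_⟩
  rintro _ ⟨x, hx, rfl⟩
  exact mem_thickening_iff.2 ⟨T i x, mem_image_of_mem _ hx, hi x hx⟩

theorem IsVStarSet.preimage_subtype {A : Set X} (hA : IsVStarSet A) {p : Submodule ℝ X}
    (hext : ∀ f : ℕ → (p →L[ℝ] ℝ), IsWUC f →
      ∃ g : ℕ → (X →L[ℝ] ℝ), IsWUC g ∧ ∀ n, ∀ v : p, g n v = f n v) :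
    IsVStarSet ((↑) ⁻¹' A : Set p) := by
  intro f hf ε hε
  obtain ⟨g, hg, hgf⟩ := hext f hf
  filter_upwards [hA g hg ε hε] with n hn v hv
  simpa only [hgf] using hn v hv

end VStarSet

section RelWeaklyCompact

open scoped Pointwise

theorem RelWeaklyCompact.image {X Y : Type*} [SeminormedAddCommGroup X] [NormedSpace ℝ X]
    [NormedAddCommGroup Y] [NormedSpace ℝ Y] {A : Set X} (hA : RelWeaklyCompact A)
    (T : X →L[ℝ] Y) : RelWeaklyCompact (T '' A) := by
  have hTA : IsCompact (WeakSpace.map T '' closure (toWeakSpace ℝ X '' A)) :=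
    IsCompact.image hA (ContinuousLinearMap.continuous _)
  refine hTA.of_isClosed_subset isClosed_closure (closure_minimal ?_ hTA.isClosed)
  rintro _ ⟨_, ⟨x, hx, rfl⟩, rfl⟩
  exact ⟨toWeakSpace ℝ X x, subset_closure ⟨x, hx, rfl⟩, rfl⟩

variable {X : Type*} [NormedAddCommGroup X] [NormedSpace ℝ X] {A Γ : Set X}

theorem RelWeaklyCompact.isBounded (hA : RelWeaklyCompact A) : Bornology.IsBounded A := by
  have himage : Bornology.IsBounded
      (NormedSpace.inclusionInDoubleDualWeak ℝ X '' closure (toWeakSpace ℝ X '' A)) :=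
    WeakDual.isBounded_iff_isVonNBounded.2
      ((IsCompact.image hA (ContinuousLinearMap.continuous _)).isVonNBounded ℝ)
  refine ((NormedSpace.inclusionInDoubleDualLi ℝ).antilipschitz.isBounded_preimage himage).subset ?_
  exact fun x hx => ⟨toWeakSpace ℝ X x, subset_closure ⟨x, hx, rfl⟩, rfl⟩

theorem RelWeaklyCompact.exists_norm_sub_le_of_mem_closure (hA : RelWeaklyCompact A) {ε : ℝ}
    (hΓ : Γ ⊆ thickening ε A) {ξ : WeakDual ℝ (X →L[ℝ] ℝ)}
    (hξ : ξ ∈ closure (NormedSpace.inclusionInDoubleDualWeak ℝ X '' (toWeakSpace ℝ X '' Γ))) :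
    ∃ x : X, ‖WeakDual.toStrongDual ξ - NormedSpace.inclusionInDoubleDual ℝ X x‖ ≤ ε := by
  set j := NormedSpace.inclusionInDoubleDualWeak ℝ X
  have hclosed : IsClosed (j '' closure (toWeakSpace ℝ X '' A) +
      WeakDual.toStrongDual ⁻¹' closedBall 0 ε) :=
    (WeakDual.isClosed_closedBall 0 ε).add_left_of_isCompact
      (IsCompact.image hA (ContinuousLinearMap.continuous _))
  have hsub : j '' (toWeakSpace ℝ X '' Γ) ⊆ j '' closure (toWeakSpace ℝ X '' A) +
      WeakDual.toStrongDual ⁻¹' closedBall 0 ε := by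
    rintro _ ⟨_, ⟨x, hx, rfl⟩, rfl⟩
    obtain ⟨a, ha, hxa⟩ := mem_thickening_iff.1 (hΓ hx)
    refine ⟨_, ⟨_, subset_closure ⟨a, ha, rfl⟩, rfl⟩, j (toWeakSpace ℝ X (x - a)), ?_, ?_⟩
    · refine (mem_closedBall_zero_iff (E := StrongDual ℝ (X →L[ℝ] ℝ))).2 (le_of_eq_of_le ?_ hxa.le)
      rw [dist_eq_norm]
      exact (NormedSpace.inclusionInDoubleDualLi ℝ).norm_map (x - a)
    · simp only [map_sub, add_sub_cancel]
  obtain ⟨_, ⟨x, -, rfl⟩, ζ, hζ, rfl⟩ := closure_minimal hsub hclosed hξ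
  refine ⟨(toWeakSpace ℝ X).symm x, ?_⟩
  have hsub_eq : WeakDual.toStrongDual (j x + ζ) -
      NormedSpace.inclusionInDoubleDual ℝ X ((toWeakSpace ℝ X).symm x) =
      WeakDual.toStrongDual ζ := add_sub_cancel_left _ _
  simpa only [hsub_eq] using! (mem_closedBall_zero_iff (E := StrongDual ℝ (X →L[ℝ] ℝ))).1 hζ

theorem mem_range_of_forall_exists_norm_sub_le {E G : Type*} [SeminormedAddCommGroup E]
    [NormedSpace ℝ E] [CompleteSpace E] [NormedAddCommGroup G] [NormedSpace ℝ G]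
    (J : E →ₗᵢ[ℝ] G) {y : G} (hy : ∀ ε > 0, ∃ x, ‖y - J x‖ ≤ ε) : y ∈ range J := by
  have hclosed : IsClosed (range J) := J.isometry.isUniformInducing.isComplete_range.isClosed
  refine hclosed.closure_subset ((mem_closure_iff_nhds_basis nhds_basis_closedBall).2 ?_)
  intro ε hε
  obtain ⟨x, hx⟩ := hy ε hε
  exact ⟨J x, ⟨x, rfl⟩, mem_closedBall_iff_norm'.2 hx⟩

theorem RelWeaklyCompact.of_approx [CompleteSpace X]
    (hΓ : ∀ ε > 0, ∃ A : Set X, RelWeaklyCompact A ∧ Γ ⊆ thickening ε A) :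
    RelWeaklyCompact Γ := by
  refine NormedSpace.isCompact_closure_of_isBounded ℝ X _ ?_ fun ξ hξ => ?_
  · obtain ⟨A, hA, hΓA⟩ := hΓ 1 one_pos
    rw [(toWeakSpace ℝ X).injective.preimage_image]
    exact hA.isBounded.thickening.subset hΓA
  · refine mem_range_of_forall_exists_norm_sub_le (G := StrongDual ℝ (StrongDual ℝ X))
      (NormedSpace.inclusionInDoubleDualLi ℝ) ?_
    intro ε hε
    obtain ⟨A, hA, hΓA⟩ := hΓ ε hε
    exact hA.exists_norm_sub_le_of_mem_closure hΓA hξ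

end RelWeaklyCompact

theorem tendsto_clm_apply_of_dense_span {ι E G : Type*} {l : Filter ι}
    [SeminormedAddCommGroup E] [NormedSpace ℝ E] [SeminormedAddCommGroup G] [NormedSpace ℝ G]
    {T : ι → E →L[ℝ] G} {S : E →L[ℝ] G} {D : Set E}
    (hD : Dense (Submodule.span ℝ D : Set E)) {C : ℝ} (hT : ∀ i, ‖T i‖ ≤ C)
    (h : ∀ x ∈ D, Tendsto (T · x) l (𝓝 (S x))) (v : E) : Tendsto (T · v) l (𝓝 (S v)) := by
  have hbound : ∃ C, ∀ i, ‖T i‖ ≤ C := ⟨C, hT⟩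
  have hequi : Equicontinuous ((↑) ∘ T) := ((NormedSpace.equicontinuous_TFAE T).out 5 1).1 hbound
  let p : Submodule ℝ E :=
    { carrier := {v | Tendsto (T · v) l (𝓝 (S v))}
      add_mem' := fun hx hy => by simpa using! Tendsto.add hx hy
      zero_mem' := by simp [tendsto_const_nhds]
      smul_mem' := fun c x hx => by simpa using! Tendsto.const_smul hx c }
  have hp : IsClosed (p : Set E) := hequi.isClosed_setOfPred_tendsto S.continuous
  have hspan : (Submodule.span ℝ D : Set E) ⊆ p := Submodule.span_le.2 h
  exact closure_minimal hspan hp (hD v)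

section RelInfDist

variable {M : Type*} [PseudoMetricSpace M] {o : M} {S : Set M}

/-- The distance from `y` to `S ∪ {o}`, relative to the size `1 + dist y o` of `y`. This
normalization makes functions of it multiply Lipschitz functions vanishing at `o` to Lipschitz
functions. -/
def relInfDist (o : M) (S : Set M) (y : M) : ℝ := infDist y (insert o S) / (1 + dist y o)

theorem relInfDist_nonneg (y : M) : 0 ≤ relInfDist o S y :=
  div_nonneg infDist_nonneg (by positivity)

theorem relInfDist_mul (y : M) : relInfDist o S y * (1 + dist y o) = infDist y (insert o S) :=
  div_mul_cancel₀ _ (by positivity)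

theorem relInfDist_le_one (y : M) : relInfDist o S y ≤ 1 := by
  rw [relInfDist, div_le_one (by positivity)]
  linarith [infDist_le_dist_of_mem (x := y) (mem_insert o S)]

theorem relInfDist_eq_zero {y : M} (hy : y ∈ insert o S) : relInfDist o S y = 0 := by
  rw [relInfDist, infDist_zero_of_mem hy, zero_div]

theorem relInfDist_anti {T : Set M} (h : S ⊆ T) (y : M) : relInfDist o T y ≤ relInfDist o S y := by
  unfold relInfDist
  gcongr
  exact infDist_le_infDist_of_subset (insert_subset_insert h) (insert_nonempty o S)

theorem abs_relInfDist_sub_mul_le (x y : M) :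
    |relInfDist o S x - relInfDist o S y| * dist y o ≤ 2 * dist x y := by
  have hinfDist : |infDist x (insert o S) - infDist y (insert o S)| ≤ dist x y := by
    simpa [Real.dist_eq] using (lipschitz_infDist_pt (insert o S)).dist_le_mul x y
  have hdist : |dist y o - dist x o| ≤ dist x y := dist_comm x y ▸ abs_dist_sub_le y x o
  calc |relInfDist o S x - relInfDist o S y| * dist y o
      ≤ |relInfDist o S x - relInfDist o S y| * |1 + dist y o| := by
        gcongr
        exact (le_add_of_nonneg_left zero_le_one).trans (le_abs_self _)
    _ = |infDist x (insert o S) - infDist y (insert o S) +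
          relInfDist o S x * (dist y o - dist x o)| := by
        rw [← abs_mul, ← relInfDist_mul x, ← relInfDist_mul y]
        ring_nf
    _ ≤ dist x y + 1 * dist x y := by
        refine (abs_add_le _ _).trans ?_
        rw [abs_mul, abs_of_nonneg (relInfDist_nonneg x)]
        gcongr
        exact relInfDist_le_one x
    _ = 2 * dist x y := by ring

/-- The points whose distance to `S ∪ {o}` is at most `c` times their size: a closed neighborhood
of `S ∪ {o}` that widens linearly away from `o`. -/
def relCthickening (o : M) (S : Set M) (c : ℝ) : Set M := {x | relInfDist o S x ≤ c}

theorem base_mem_relCthickening {c : ℝ} (hc : 0 ≤ c) : o ∈ relCthickening o S c :=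
  (relInfDist_eq_zero (mem_insert o S)).trans_le hc

theorem exists_dist_lt_of_mem_relCthickening {c c' : ℝ} (hc : c < c') {x : M}
    (hx : x ∈ relCthickening o S c) : ∃ e ∈ insert o S, dist x e < c' * (1 + dist x o) := by
  refine (infDist_lt_iff (insert_nonempty o S)).1 ?_
  rw [← relInfDist_mul]
  exact mul_lt_mul_of_pos_right (lt_of_le_of_lt hx hc) (by positivity)

theorem isBounded_relCthickening (hS : Bornology.IsBounded S) {c : ℝ} (hc : c < 1) :
    Bornology.IsBounded (relCthickening o S c) := by
  obtain ⟨c', hcc', hc'⟩ := exists_between hc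
  obtain ⟨R, hR⟩ := (hS.insert o).subset_closedBall o
  refine (isBounded_iff_subset_closedBall o).2 ⟨(c' + R) / (1 - c'), fun x hx => ?_⟩
  obtain ⟨e, he, hxe⟩ := exists_dist_lt_of_mem_relCthickening hcc' hx
  rw [mem_closedBall, le_div_iff₀ (sub_pos.2 hc')]
  linarith [dist_triangle x e o, mem_closedBall.1 (hR he)]

theorem totallyBounded_of_relCthickening_mem {l : Filter M}
    (hl : ∀ c > 0, ∃ S : Set M, S.Finite ∧ relCthickening o S c ∈ l) : l.TotallyBounded := by
  obtain ⟨S₀, hS₀, hlS₀⟩ := hl (1 / 2) one_half_pos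
  obtain ⟨R, hR⟩ :=
    (isBounded_relCthickening (o := o) hS₀.isBounded one_half_lt_one).subset_closedBall o
  refine uniformity_basis_dist.filter_totallyBounded_iff.2 fun r hr => ?_
  have hR' : 0 < 1 + max R 0 := by positivity
  obtain ⟨S, hS, hlS⟩ := hl (r / (1 + max R 0) / 2) (by positivity)
  refine ⟨insert o S, hS.insert o, ?_⟩
  filter_upwards [hlS₀, hlS] with x hx₀ hx
  obtain ⟨e, he, hxe⟩ := exists_dist_lt_of_mem_relCthickening (half_lt_self (by positivity)) hx
  refine ⟨e, he, hxe.trans_le ?_⟩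
  calc r / (1 + max R 0) * (1 + dist x o) ≤ r / (1 + max R 0) * (1 + max R 0) := by
        gcongr
        exact le_max_of_le_left (hR hx₀)
    _ = r := div_mul_cancel₀ _ hR'.ne'

/-- A Lipschitz cutoff, equal to `1` where `relInfDist o S ≤ t` and to `0` where
`2 * t ≤ relInfDist o S`. -/
def cutoff (o : M) (S : Set M) (t : ℝ) (y : M) : ℝ := max 0 (min 1 (2 - relInfDist o S y / t))

theorem abs_cutoff_le_one (t : ℝ) (y : M) : |cutoff o S t y| ≤ 1 := by
  rw [cutoff, abs_of_nonneg (le_max_left _ _)]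
  exact max_le zero_le_one (min_le_left _ _)

variable {t : ℝ}

theorem cutoff_eq_one (ht : 0 < t) {y : M} (hy : relInfDist o S y ≤ t) : cutoff o S t y = 1 := by
  have hdiv : relInfDist o S y / t ≤ 1 := (div_le_one ht).2 hy
  rw [cutoff, min_eq_left (by linarith), max_eq_right zero_le_one]

theorem cutoff_eq_zero (ht : 0 < t) {y : M} (hy : 2 * t ≤ relInfDist o S y) :
    cutoff o S t y = 0 :=
  max_eq_left (min_le_of_right_le (sub_nonpos.2 ((le_div_iff₀ ht).2 hy)))

theorem abs_cutoff_sub_mul_le (ht : 0 < t) (x y : M) :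
    |cutoff o S t x - cutoff o S t y| * dist y o ≤ 2 / t * dist x y := by
  have hcutoff : |cutoff o S t x - cutoff o S t y| ≤ |relInfDist o S x - relInfDist o S y| / t :=
    calc |cutoff o S t x - cutoff o S t y|
        ≤ |(2 - relInfDist o S x / t) - (2 - relInfDist o S y / t)| := by
          refine (abs_max_sub_max_le_max _ _ _ _).trans (max_le (by simp) ?_)
          exact (abs_min_sub_min_le_max _ _ _ _).trans (max_le (by simp) le_rfl)
      _ = |relInfDist o S x - relInfDist o S y| / t := by
          rw [sub_sub_sub_cancel_left, ← sub_div, abs_div, abs_of_pos ht, abs_sub_comm]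
  calc |cutoff o S t x - cutoff o S t y| * dist y o
      ≤ |relInfDist o S x - relInfDist o S y| / t * dist y o := by gcongr
    _ = |relInfDist o S x - relInfDist o S y| * dist y o / t := div_mul_eq_mul_div _ _ _
    _ ≤ 2 * dist x y / t := div_le_div_of_nonneg_right (abs_relInfDist_sub_mul_le x y) ht.le
    _ = 2 / t * dist x y := mul_div_right_comm _ _ _

end RelInfDist

theorem tendsto_of_totallyBounded_of_eq_of_clusterPt {X Y : Type*} [UniformSpace X]
    [CompleteSpace X] [TopologicalSpace Y] {l : Filter X} (hl : l.TotallyBounded) {f : X → Y}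
    (hf : Continuous f) {y : Y} (hfy : ∀ x, ClusterPt x l → f x = y) : Tendsto f l (𝓝 y) := by
  refine (tendsto_iff_ultrafilter _ _ _).2 fun u hu => ?_
  obtain ⟨x, hx⟩ := CompleteSpace.complete (u.cauchy_of_totallyBounded' (hl.mono hu))
  have hxl : ClusterPt x l := (ClusterPt.of_le_nhds hx).mono hu
  exact hfy x hxl ▸ (hf.tendsto x).mono_left hx

theorem exists_tendstoUniformlyOn_of_le_geometric_two {X Y : Type*} [PseudoMetricSpace Y]
    [CompleteSpace Y] [Nonempty Y] {f : ℕ → X → Y} {s : Set X} {C : ℝ}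
    (hf : ∀ x ∈ s, ∀ n, dist (f n x) (f (n + 1) x) ≤ C / 2 / 2 ^ n) :
    ∃ g : X → Y, TendstoUniformlyOn f g atTop s ∧ ∀ x ∈ s, dist (f 0 x) (g x) ≤ C := by
  choose! g hg using fun x hx =>
    cauchySeq_tendsto_of_complete (cauchySeq_of_le_geometric_two (hf x hx))
  have hdist : ∀ x ∈ s, ∀ n, dist (f n x) (g x) ≤ C / 2 ^ n := fun x hx =>
    dist_le_of_le_geometric_two_of_tendsto (hf x hx) (hg x hx)
  refine ⟨g, Metric.tendstoUniformlyOn_iff.2 fun ε hε => ?_, fun x hx => ?_⟩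
  · have hlim : Tendsto (fun n : ℕ => C / 2 ^ n) atTop (𝓝 0) :=
      tendsto_const_nhds.div_atTop (tendsto_pow_atTop_atTop_of_one_lt one_lt_two)
    filter_upwards [hlim.eventually_lt_const hε] with n hn x hx
    exact dist_comm (f n x) (g x) ▸ (hdist x hx n).trans_lt hn
  · exact (hdist x hx 0).trans_eq (by rw [pow_zero, div_one])

section FreeLift

variable {M : Type*} {F : Type*} [NormedAddCommGroup F] [NormedSpace ℝ F]
  {Y : Type*} [NormedAddCommGroup Y] [NormedSpace ℝ Y] [CompleteSpace Y]

/-- The continuous linear extension `F(M) → Y` of a Lipschitz map `f : M → Y` vanishing at the base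
point, for `δ` a realization of `F(M)`. For other `f` it is a junk value. -/
def freeLift (δ : M → F) (f : M → Y) : F →L[ℝ] Y :=
  (Finsupp.linearCombination ℝ f).extendOfNorm (Finsupp.linearCombination ℝ δ)

/-- The operator on `F(M)` that multiplies each `δ x` by `cutoff o S t x`. -/
def cutoffOp [PseudoMetricSpace M] [CompleteSpace F] (δ : M → F) (o : M) (S : Set M) (t : ℝ) :
    F →L[ℝ] F :=
  freeLift δ fun x => cutoff o S t x • δ x

end FreeLift

namespace IsLipschitzFree

variable {M : Type*} [MetricSpace M] {o : M} {F : Type*} [NormedAddCommGroup F] [NormedSpace ℝ F]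
  {δ : M → F}

theorem norm_apply (hδ : IsLipschitzFree o δ) (x : M) : ‖δ x‖ = dist x o := by
  rw [← hδ.isometry.dist_eq, hδ.map_base, dist_zero_right]

theorem lipschitzWith_clm_comp (hδ : IsLipschitzFree o δ) (φ : F →L[ℝ] ℝ) :
    LipschitzWith ‖φ‖₊ fun x => φ (δ x) := by
  simpa using! φ.lipschitz.comp hδ.isometry.lipschitz

theorem opNorm_le_of_lipschitzWith (hδ : IsLipschitzFree o δ) (φ : F →L[ℝ] ℝ) {L : NNReal}
    (hφ : LipschitzWith L fun x => φ (δ x)) : ‖φ‖ ≤ L := by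
  obtain ⟨ψ, hψ, hψφ⟩ := hδ.lift L _ hφ (by rw [hδ.map_base, map_zero])
  have hψ_eq : ψ = φ := ContinuousLinearMap.ext_on hδ.dense_span (forall_mem_range.2 hψφ)
  exact hψ_eq ▸ hψ

section Lift

variable {Y : Type*} [NormedAddCommGroup Y] [NormedSpace ℝ Y] {f : M → Y} {L : NNReal}

theorem denseRange_linearCombination (hδ : IsLipschitzFree o δ) :
    DenseRange (Finsupp.linearCombination ℝ δ) := by
  have hdense := hδ.dense_span
  rwa [← Finsupp.range_linearCombination] at hdense

theorem norm_linearCombination_le (hδ : IsLipschitzFree o δ) (hf : LipschitzWith L f)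
    (hfo : f o = 0) (c : M →₀ ℝ) :
    ‖Finsupp.linearCombination ℝ f c‖ ≤ L * ‖Finsupp.linearCombination ℝ δ c‖ := by
  refine NormedSpace.norm_le_dual_bound ℝ _ (by positivity) fun φ => ?_
  obtain ⟨ψ, hψ, hψφ⟩ := hδ.lift (‖φ‖₊ * L) (φ ∘ f) (φ.lipschitz.comp hf) (by simp [hfo])
  have hφψ : φ (Finsupp.linearCombination ℝ f c) = ψ (Finsupp.linearCombination ℝ δ c) := by
    simp only [Finsupp.linearCombination_apply, map_finsuppSum, map_smul, hψφ, Function.comp_apply]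
  calc ‖φ (Finsupp.linearCombination ℝ f c)‖
      ≤ ↑(‖φ‖₊ * L) * ‖Finsupp.linearCombination ℝ δ c‖ := hφψ ▸ ψ.le_of_opNorm_le hψ _
    _ = L * ‖Finsupp.linearCombination ℝ δ c‖ * ‖φ‖ := by
        rw [NNReal.coe_mul, coe_nnnorm]
        ring

variable [CompleteSpace Y]

theorem norm_freeLift_le (hδ : IsLipschitzFree o δ) (hf : LipschitzWith L f) (hfo : f o = 0) :
    ‖freeLift δ f‖ ≤ L :=
  LinearMap.opNorm_extendOfNorm_le hδ.denseRange_linearCombination L.2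
    (hδ.norm_linearCombination_le hf hfo)

theorem freeLift_apply (hδ : IsLipschitzFree o δ) (hf : LipschitzWith L f) (hfo : f o = 0) (x : M) :
    freeLift δ f (δ x) = f x := by
  simpa using! LinearMap.extendOfNorm_eq hδ.denseRange_linearCombination
    ⟨_, hδ.norm_linearCombination_le hf hfo⟩ (Finsupp.single x 1)

end Lift

section CutoffOp

theorem lipschitzWith_smul (hδ : IsLipschitzFree o δ) {h : M → ℝ} {B C : NNReal}
    (hB : ∀ x, |h x| ≤ B) (hC : ∀ x y, |h x - h y| * dist y o ≤ C * dist x y) :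
    LipschitzWith (B + C) fun x => h x • δ x := by
  refine LipschitzWith.of_dist_le_mul fun x y => ?_
  calc dist (h x • δ x) (h y • δ y) = ‖h x • (δ x - δ y) + (h x - h y) • δ y‖ := by
        rw [dist_eq_norm, smul_sub, sub_smul, sub_add_sub_cancel]
    _ ≤ |h x| * dist x y + |h x - h y| * dist y o := by
        refine (norm_add_le _ _).trans_eq ?_
        rw [norm_smul, norm_smul, hδ.norm_apply, ← dist_eq_norm, hδ.isometry.dist_eq,
          Real.norm_eq_abs, Real.norm_eq_abs]
    _ ≤ B * dist x y + C * dist x y :=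
        add_le_add (mul_le_mul_of_nonneg_right (hB x) dist_nonneg) (hC x y)
    _ = ↑(B + C) * dist x y := by rw [NNReal.coe_add, add_mul]

variable {t : ℝ}

theorem lipschitzWith_cutoff_smul (hδ : IsLipschitzFree o δ) (ht : 0 < t) (S : Set M) :
    LipschitzWith (1 + (2 / t).toNNReal) fun x => cutoff o S t x • δ x := by
  refine hδ.lipschitzWith_smul (abs_cutoff_le_one t) fun x y => ?_
  rw [Real.coe_toNNReal _ (by positivity)]
  exact abs_cutoff_sub_mul_le ht x y

variable [CompleteSpace F]

theorem norm_cutoffOp_le (hδ : IsLipschitzFree o δ) (ht : 0 < t) (S : Set M) :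
    ‖cutoffOp δ o S t‖ ≤ 1 + 2 / t := by
  refine (hδ.norm_freeLift_le (hδ.lipschitzWith_cutoff_smul ht S) ?_).trans_eq ?_
  · rw [hδ.map_base, smul_zero]
  · rw [NNReal.coe_add, NNReal.coe_one, Real.coe_toNNReal _ (by positivity)]

theorem cutoffOp_apply (hδ : IsLipschitzFree o δ) (ht : 0 < t) (S : Set M) (x : M) :
    cutoffOp δ o S t (δ x) = cutoff o S t x • δ x :=
  hδ.freeLift_apply (hδ.lipschitzWith_cutoff_smul ht S) (by rw [hδ.map_base, smul_zero]) x

theorem tendsto_cutoffOp (hδ : IsLipschitzFree o δ) (ht : 0 < t) (μ : F) :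
    Tendsto (fun E : Finset M => cutoffOp δ o (E : Set M) t μ) atTop (𝓝 μ) := by
  refine tendsto_clm_apply_of_dense_span (S := ContinuousLinearMap.id ℝ F) hδ.dense_span
    (fun E : Finset M => hδ.norm_cutoffOp_le ht E) (forall_mem_range.2 fun x => ?_) μ
  refine tendsto_const_nhds.congr' ?_
  filter_upwards [eventually_ge_atTop {x}] with E hE
  have hx : relInfDist o (E : Set M) x = 0 :=
    relInfDist_eq_zero (mem_insert_of_mem o (Finset.singleton_subset_iff.1 hE))
  rw [hδ.cutoffOp_apply ht, cutoff_eq_one ht (hx.trans_le ht.le), one_smul,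
    ContinuousLinearMap.id_apply]

end CutoffOp

section VStarSet

theorem isWUC_of_pairwise_disjoint_support (hδ : IsLipschitzFree o δ) {L : NNReal}
    {g : ℕ → F →L[ℝ] ℝ} (hL : ∀ n, ‖g n‖ ≤ L)
    (hg : Pairwise (Function.onFun Disjoint fun n => Function.support fun x => g n (δ x))) :
    IsWUC g := by
  have hsupp : ∀ x, ∃ i, ∀ n, g n (δ x) ≠ 0 → n = i := fun x => by
    by_cases hx : ∃ i, g i (δ x) ≠ 0
    · obtain ⟨i, hi⟩ := hx
      exact ⟨i, fun n hn => hg.eq (not_disjoint_iff.2 ⟨x, hn, hi⟩)⟩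
    · exact ⟨0, fun n hn => absurd ⟨n, hn⟩ hx⟩
  refine isWUC_of_norm_sum_smul_le (C := ↑(2 * L)) fun s σ hσ =>
    hδ.opNorm_le_of_lipschitzWith _ (LipschitzWith.of_dist_le_mul fun x y => ?_)
  obtain ⟨i, hi⟩ := hsupp x
  obtain ⟨j, hj⟩ := hsupp y
  have hterm : ∀ n, ‖(σ n • g n) (δ x - δ y)‖ ≤ L * dist x y := fun n => by
    rw [← hδ.isometry.dist_eq, dist_eq_norm, smul_apply, norm_smul]
    exact (mul_le_of_le_one_left (norm_nonneg _) (hσ n)).trans ((g n).le_of_opNorm_le (hL n) _)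
  have hsupp_sub : ∀ n ∈ s, (σ n • g n) (δ x - δ y) ≠ 0 → n ∈ ({i, j} : Finset ℕ) := by
    intro n _ hn
    contrapose! hn
    have hn' : n ≠ i ∧ n ≠ j := by simpa using hn
    rw [smul_apply, map_sub, not_not.1 fun h => hn'.1 (hi n h),
      not_not.1 fun h => hn'.2 (hj n h), sub_zero, smul_zero]
  calc dist ((∑ n ∈ s, σ n • g n) (δ x)) ((∑ n ∈ s, σ n • g n) (δ y))
      = ‖∑ n ∈ s, (σ n • g n) (δ x - δ y)‖ := by
        rw [dist_eq_norm, ← map_sub, sum_apply]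
    _ ≤ ({i, j} : Finset ℕ).card * (L * dist x y) :=
        norm_sum_le_card_mul_of_support_subset (by positivity) (fun n _ => hterm n) hsupp_sub
    _ ≤ 2 * (L * dist x y) := by
        gcongr
        exact_mod_cast Finset.card_le_two
    _ = ↑(2 * L) * dist x y := by rw [NNReal.coe_mul, NNReal.coe_ofNat, mul_assoc]

variable [CompleteSpace F] {t ε : ℝ}

-- `g` is a norming functional of `μ - cutoffOp δ o E t μ`, cut off away from `E` and near `E'`.
theorem exists_clm_of_lt_norm_sub_cutoffOp (hδ : IsLipschitzFree o δ) (ht : 0 < t) {E : Finset M}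
    {μ : F} (hμ : ε < ‖μ - cutoffOp δ o (E : Set M) t μ‖) :
    ∃ E' : Finset M, E ⊆ E' ∧ ∃ g : F →L[ℝ] ℝ, ‖g‖ ≤ (2 + 2 / t) * (1 + 4 / t) ∧
      (∀ x, g (δ x) ≠ 0 → t < relInfDist o E x ∧ relInfDist o E' x < t) ∧ ε < g μ := by
  have ht' : 0 < t / 2 := half_pos ht
  obtain ⟨f, hf, hfμ⟩ := exists_dual_vector'' ℝ (μ - cutoffOp δ o (E : Set M) t μ)
  set h : F →L[ℝ] ℝ := f ∘L (ContinuousLinearMap.id ℝ F - cutoffOp δ o (E : Set M) t)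
  have hhμ : h μ = ‖μ - cutoffOp δ o (E : Set M) t μ‖ := hfμ
  have hh : ‖h‖ ≤ 2 + 2 / t := by
    calc ‖h‖ ≤ ‖f‖ * (‖ContinuousLinearMap.id ℝ F‖ + ‖cutoffOp δ o (E : Set M) t‖) :=
          (f.opNorm_comp_le _).trans (mul_le_mul_of_nonneg_left (norm_sub_le _ _) (norm_nonneg f))
      _ ≤ 1 * (1 + (1 + 2 / t)) := by
          gcongr
          exacts [ContinuousLinearMap.norm_id_le, hδ.norm_cutoffOp_le ht E]
      _ = 2 + 2 / t := by ring
  have hlim : Tendsto (fun E' : Finset M => h (cutoffOp δ o (E' : Set M) (t / 2) μ)) atTop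
      (𝓝 (h μ)) := (h.continuous.tendsto μ).comp (hδ.tendsto_cutoffOp ht' μ)
  obtain ⟨E', hE', hEE'⟩ :=
    ((hlim.eventually_const_lt (hhμ ▸ hμ)).and (eventually_ge_atTop E)).exists
  refine ⟨E', hEE', h ∘L cutoffOp δ o (E' : Set M) (t / 2), ?_, fun x hx => ?_, hE'⟩
  · refine (h.opNorm_comp_le _).trans ?_
    gcongr
    exact (hδ.norm_cutoffOp_le ht' E').trans_eq (by field_simp; ring)
  · have hgx : (h ∘L cutoffOp δ o (E' : Set M) (t / 2)) (δ x) =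
        cutoff o (E' : Set M) (t / 2) x * ((1 - cutoff o (E : Set M) t x) * f (δ x)) := by
      simp [h, hδ.cutoffOp_apply ht, hδ.cutoffOp_apply ht', sub_mul, mul_sub]
    rw [hgx] at hx
    constructor <;> by_contra! hle <;> refine hx ?_
    · rw [cutoff_eq_one ht hle, sub_self, zero_mul, mul_zero]
    · rw [cutoff_eq_zero ht' (by linarith), zero_mul]

-- Otherwise the functionals of the previous lemma, chosen successively, have disjoint supports and
-- form a WUC series that stays above `ε` on `Γ`.
theorem exists_finset_norm_sub_cutoffOp_le (hδ : IsLipschitzFree o δ) (ht : 0 < t) (hε : 0 < ε)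
    {Γ : Set F} (hΓ : IsVStarSet Γ) :
    ∃ E : Finset M, ∀ μ ∈ Γ, ‖μ - cutoffOp δ o (E : Set M) t μ‖ ≤ ε := by
  by_contra! hfar
  choose μ hμ hεμ using hfar
  choose next hnext g hg hsupp hgμ using fun E =>
    hδ.exists_clm_of_lt_norm_sub_cutoffOp ht (hεμ E)
  let E : ℕ → Finset M := fun n => next^[n] ∅
  have hE : ∀ n, E (n + 1) = next (E n) := fun n => Function.iterate_succ_apply' _ _ _
  have hmono : Monotone E := monotone_nat_of_le_succ fun n => hE n ▸ hnext (E n)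
  have hwuc : IsWUC fun n => g (E n) := by
    refine hδ.isWUC_of_pairwise_disjoint_support
      (L := ⟨(2 + 2 / t) * (1 + 4 / t), by positivity⟩) (fun n => hg (E n)) ?_
    refine (pairwise_disjoint_on _).2 fun m n hmn => disjoint_left.2 fun x hm hn => ?_
    have hanti : relInfDist o (E n : Set M) x ≤ relInfDist o (E (m + 1) : Set M) x :=
      relInfDist_anti (Finset.coe_subset.2 (hmono hmn)) x
    rw [hE] at hanti
    exact ((hsupp _ x hn).1.trans_le hanti).not_gt (hsupp _ x hm).2
  obtain ⟨n, hn⟩ := (hΓ _ hwuc ε hε).exists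
  exact (hgμ (E n)).not_ge ((le_abs_self _).trans (hn _ (hμ (E n))))

end VStarSet

end IsLipschitzFree

theorem exists_clm_eq_zero_of_notMem {E : Type*} [NormedAddCommGroup E] [NormedSpace ℝ E]
    {p : Submodule ℝ E} (hp : IsClosed (p : Set E)) {v : E} (hv : v ∉ p) :
    ∃ φ : E →L[ℝ] ℝ, (∀ w ∈ p, φ w = 0) ∧ φ v ≠ 0 := by
  have : IsClosed (p : Set E) := hp
  obtain ⟨φ, hφ⟩ := SeparatingDual.exists_ne_zero (R := ℝ) (x := p.mkQL v)
    ((Submodule.Quotient.mk_eq_zero p).not.2 hv)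
  refine ⟨φ ∘L p.mkQL, fun w hw => ?_, hφ⟩
  exact (congrArg φ ((Submodule.Quotient.mk_eq_zero p).2 hw)).trans (map_zero φ)

section FreeSpan

variable {M : Type*} [MetricSpace M] {F : Type*} [NormedAddCommGroup F] [NormedSpace ℝ F]
  {δ : M → F} {S T : Set M}

theorem isClosed_freeSpan : IsClosed (freeSpan δ S : Set F) :=
  Submodule.isClosed_topologicalClosure _

theorem freeSpan_mono (h : S ⊆ T) : freeSpan δ S ≤ freeSpan δ T :=
  Submodule.topologicalClosure_mono (Submodule.span_mono (image_mono h))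

theorem freeSpan_le {p : Submodule ℝ F} (hp : IsClosed (p : Set F)) (h : ∀ x ∈ S, δ x ∈ p) :
    freeSpan δ S ≤ p :=
  Submodule.topologicalClosure_minimal _ (Submodule.span_le.2 (forall_mem_image.2 h)) hp

theorem eqOn_freeSpan {Y : Type*} [NormedAddCommGroup Y] [NormedSpace ℝ Y] {φ ψ : F →L[ℝ] Y}
    (h : ∀ x ∈ S, φ (δ x) = ψ (δ x)) : EqOn φ ψ (freeSpan δ S) :=
  ContinuousLinearMap.eqOn_closure_span (forall_mem_image.2 h)

theorem clm_apply_eq_of_forall_mem {g : F →L[ℝ] ℝ} {f : freeSpan δ S →L[ℝ] ℝ}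
    (h : ∀ x, ∀ hx : x ∈ S, g (δ x) = f ⟨δ x, mem_freeSpan δ hx⟩) (v : freeSpan δ S) :
    g v = f v := by
  obtain ⟨φ, hφ, -⟩ := exists_extension_norm_eq (freeSpan δ S) f
  have hgφ : ∀ x ∈ S, g (δ x) = φ (δ x) := fun x hx => (h x hx).trans (hφ _).symm
  exact (eqOn_freeSpan hgφ v.2).trans (hφ v)

end FreeSpan

namespace IsLipschitzFree

variable {M : Type*} [MetricSpace M] {o : M} {F : Type*} [NormedAddCommGroup F] [NormedSpace ℝ F]
  {δ : M → F}

theorem freeSpan_univ (hδ : IsLipschitzFree o δ) : freeSpan δ univ = ⊤ := by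
  rw [freeSpan, image_univ]
  exact Submodule.dense_iff_topologicalClosure_eq_top.1 hδ.dense_span

theorem cutoffOp_mem_freeSpan [CompleteSpace F] (hδ : IsLipschitzFree o δ) {t : ℝ} (ht : 0 < t)
    (E : Set M) {S : Set M} {v : F} (hv : v ∈ freeSpan δ S) :
    cutoffOp δ o E t v ∈ freeSpan δ (S ∩ relCthickening o E (2 * t)) := by
  let p := (freeSpan δ (S ∩ relCthickening o E (2 * t))).comap (cutoffOp δ o E t).toLinearMap
  have hp : IsClosed (p : Set F) := isClosed_freeSpan.preimage (cutoffOp δ o E t).continuous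
  refine freeSpan_le hp (fun x hx => ?_) hv
  change cutoffOp δ o E t (δ x) ∈ freeSpan δ (S ∩ relCthickening o E (2 * t))
  rw [hδ.cutoffOp_apply ht]
  rcases le_total (2 * t) (relInfDist o E x) with hfar | hnear
  · rw [cutoff_eq_zero ht hfar, zero_smul]
    exact Submodule.zero_mem _
  · exact Submodule.smul_mem _ _ (mem_freeSpan δ ⟨hx, hnear⟩)

section ClusterPoints

theorem exists_clm_clamp (hδ : IsLipschitzFree o δ) (φ : F →L[ℝ] ℝ) {η : ℝ} (hη : 0 ≤ η) :
    ∃ ψ : F →L[ℝ] ℝ, ‖ψ‖ ≤ ‖φ‖ ∧ (∀ x, |ψ (δ x)| ≤ η) ∧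
      ∀ x, |φ (δ x)| ≤ η → ψ (δ x) = φ (δ x) := by
  obtain ⟨ψ, hψ, hψφ⟩ := hδ.lift ‖φ‖₊ (fun x => max (-η) (min η (φ (δ x))))
    (((hδ.lipschitzWith_clm_comp φ).const_min η).const_max (-η)) (by simp [hδ.map_base, hη])
  refine ⟨ψ, hψ, fun x => ?_, fun x hx => ?_⟩
  · rw [hψφ, abs_le]
    exact ⟨le_max_left _ _, max_le (neg_le_self hη) (min_le_left _ _)⟩
  · rw [hψφ, min_eq_right (abs_le.1 hx).2, max_eq_right (abs_le.1 hx).1]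

-- Clamping `φ` at level `η` does not change `φ v`, while the clamped functionals tend weak* to `0`
-- as `η → 0`.
theorem clm_apply_eq_zero_of_tendsto (hδ : IsLipschitzFree o δ) {φ : F →L[ℝ] ℝ} {l : Filter M}
    (hφ : Tendsto (fun x => φ (δ x)) l (𝓝 0)) {v : F} (hv : ∀ S ∈ l, v ∈ freeSpan δ S) :
    φ v = 0 := by
  choose ψ hψ_norm hψ_le hψ_eq using fun n : ℕ =>
    hδ.exists_clm_clamp φ (η := 1 / ((n : ℝ) + 1)) (by positivity)
  have hψv : ∀ n, ψ n v = φ v := fun n => by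
    have hsmall : {x | |φ (δ x)| ≤ 1 / ((n : ℝ) + 1)} ∈ l := by
      filter_upwards [hφ.eventually (closedBall_mem_nhds 0 Nat.one_div_pos_of_nat)] with x hx
      simpa using hx
    exact eqOn_freeSpan (fun x hx => hψ_eq n x hx) (hv _ hsmall)
  have hψ_tendsto : Tendsto (fun n => ψ n v) atTop (𝓝 0) := by
    refine tendsto_clm_apply_of_dense_span (S := (0 : F →L[ℝ] ℝ)) hδ.dense_span hψ_norm
      (forall_mem_range.2 fun x => ?_) v
    exact squeeze_zero_norm (fun n => hψ_le n x) tendsto_one_div_add_atTop_nhds_zero_nat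
  simp only [hψv] at hψ_tendsto
  exact tendsto_nhds_unique tendsto_const_nhds hψ_tendsto

theorem mem_freeSpan_setOf_clusterPt [CompleteSpace M] (hδ : IsLipschitzFree o δ) {l : Filter M}
    (hl : l.TotallyBounded) {v : F} (hv : ∀ S ∈ l, v ∈ freeSpan δ S) :
    v ∈ freeSpan δ {x | ClusterPt x l} := by
  by_contra hvK
  obtain ⟨φ, hφ, hφv⟩ := exists_clm_eq_zero_of_notMem isClosed_freeSpan hvK
  refine hφv (hδ.clm_apply_eq_zero_of_tendsto ?_ hv)
  exact tendsto_of_totallyBounded_of_eq_of_clusterPt hl (hδ.lipschitzWith_clm_comp φ).continuous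
    fun x hx => hφ _ (mem_freeSpan δ hx)

end ClusterPoints

section CompactReduction

variable [CompleteSpace F] {Γ : Set F}

theorem exists_seq_cutoffOp (hδ : IsLipschitzFree o δ) (hΓ : IsVStarSet Γ) {t ε : ℕ → ℝ}
    (ht : ∀ n, 0 < t n) (hε : ∀ n, 0 < ε n) :
    ∃ (P : ℕ → F →L[ℝ] F) (E : ℕ → Finset M), P 0 = ContinuousLinearMap.id ℝ F ∧
      (∀ n, P (n + 1) = cutoffOp δ o (E n) (t n) ∘L P n) ∧
      ∀ μ ∈ Γ, ∀ n, dist (P n μ) (P (n + 1) μ) ≤ ε n := by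
  choose E hE using fun n P =>
    hδ.exists_finset_norm_sub_cutoffOp_le (ht n) (hε n) (hΓ.image P)
  let P : ℕ → F →L[ℝ] F := fun n =>
    n.rec (ContinuousLinearMap.id ℝ F) fun k Q => cutoffOp δ o (E k Q) (t k) ∘L Q
  refine ⟨P, fun n => E n (P n), rfl, fun n => rfl, fun μ hμ n => ?_⟩
  exact (dist_eq_norm _ _).trans_le (hE n (P n) _ (mem_image_of_mem _ hμ))

theorem mem_freeSpan_of_forall_eq_cutoffOp_comp (hδ : IsLipschitzFree o δ) {t : ℕ → ℝ}
    (ht : ∀ n, 0 < t n) {P : ℕ → F →L[ℝ] F} {E : ℕ → Set M}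
    (hP : ∀ n, P (n + 1) = cutoffOp δ o (E n) (t n) ∘L P n) (n : ℕ) (v : F) :
    P n v ∈ freeSpan δ (⋂ i < n, relCthickening o (E i) (2 * t i)) := by
  induction n with
  | zero => simp [hδ.freeSpan_univ]
  | succ n ih =>
    rw [hP, biInter_lt_succ]
    exact hδ.cutoffOp_mem_freeSpan (ht n) (E n) ih

theorem exists_seq_clm_totallyBounded (hδ : IsLipschitzFree o δ) (hΓ : IsVStarSet Γ) {ε : ℕ → ℝ}
    (hε : ∀ n, 0 < ε n) :
    ∃ (P : ℕ → F →L[ℝ] F) (l : Filter M), l.TotallyBounded ∧ pure o ≤ l ∧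
      P 0 = ContinuousLinearMap.id ℝ F ∧
      (∀ S ∈ l, ∀ v, ∀ᶠ n in atTop, P n v ∈ freeSpan δ S) ∧
      ∀ μ ∈ Γ, ∀ n, dist (P n μ) (P (n + 1) μ) ≤ ε n := by
  let t : ℕ → ℝ := fun n => 1 / ((n : ℝ) + 1)
  have ht : ∀ n, 0 < t n := fun n => Nat.one_div_pos_of_nat
  obtain ⟨P, E, hP₀, hP, hΓP⟩ := hδ.exists_seq_cutoffOp hΓ ht hε
  let B : ℕ → Set M := fun n => ⋂ i < n, relCthickening o (E i : Set M) (2 * t i)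
  have hB : Antitone B := fun m n hmn => biInter_mono (fun i hi => lt_of_lt_of_le hi hmn)
    fun _ _ => le_rfl
  have hl : (⨅ n, 𝓟 (B n)).HasBasis (fun _ => True) B := hasBasis_iInf_principal hB.directed_ge
  refine ⟨P, ⨅ n, 𝓟 (B n), ?_, ?_, hP₀, fun S hS v => ?_, hΓP⟩
  · refine totallyBounded_of_relCthickening_mem (o := o) fun c hc => ?_
    obtain ⟨n, hn⟩ := exists_nat_one_div_lt (half_pos hc)
    refine ⟨E n, (E n).finite_toSet, hl.mem_iff.2 ⟨n + 1, trivial, fun x hx => ?_⟩⟩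
    have hx' : relInfDist o (E n : Set M) x ≤ 2 * t n := mem_iInter₂.1 hx n n.lt_succ_self
    exact hx'.trans (by linarith)
  · exact le_iInf fun n => (pure_le_principal _).2 <|
      mem_iInter₂.2 fun i _ => base_mem_relCthickening (mul_nonneg zero_le_two (ht i).le)
  · obtain ⟨m, -, hm⟩ := hl.mem_iff.1 hS
    filter_upwards [eventually_ge_atTop m] with n hn
    exact freeSpan_mono ((hB hn).trans hm)
      (hδ.mem_freeSpan_of_forall_eq_cutoffOp_comp ht hP n v)

theorem exists_isCompact_subset_thickening [CompleteSpace M] (hδ : IsLipschitzFree o δ)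
    (hΓ : IsVStarSet Γ) {ε : ℝ} (hε : 0 < ε) :
    ∃ K : Set M, IsCompact K ∧ o ∈ K ∧ ∃ A : Set F, IsVStarSet A ∧ A ⊆ freeSpan δ K ∧
      Γ ⊆ thickening ε A := by
  obtain ⟨P, l, hl, hol, hP₀, hPl, hΓP⟩ :=
    hδ.exists_seq_clm_totallyBounded hΓ (ε := fun n => ε / 2 / 2 / 2 ^ n) fun n => by positivity
  obtain ⟨p, hp, hdist⟩ := exists_tendstoUniformlyOn_of_le_geometric_two hΓP
  refine ⟨{x | ClusterPt x l}, hl.isCompact_setOfPred_clusterPt, ?_, p '' Γ,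
    hΓ.image_of_tendstoUniformlyOn hp, ?_, fun μ hμ => ?_⟩
  · exact (pure_neBot (a := o)).mono (le_inf (pure_le_nhds o) hol)
  · rintro _ ⟨μ, hμ, rfl⟩
    exact hδ.mem_freeSpan_setOf_clusterPt hl fun S hS =>
      isClosed_freeSpan.mem_of_tendsto (hp.tendsto_at hμ) (hPl S hS μ)
  · refine mem_thickening_iff.2 ⟨p μ, mem_image_of_mem p hμ, ?_⟩
    have hμp : dist μ (p μ) ≤ ε / 2 := by simpa [hP₀] using hdist μ hμ
    exact hμp.trans_lt (half_lt_self hε)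

end CompactReduction

end IsLipschitzFree

/-- Suppose that for every compact `K ⊆ M` containing the base point and every WUC
series `∑ fₙ` in `Lip₀(K)` there is a WUC series `∑ gₙ` in `Lip₀(M)` with `gₙ|_K = fₙ`.
(Here `Lip₀(K)` and `Lip₀(M)` are realized as the duals `F(K)*` and `F(M)*`, and a
functional corresponds to the Lipschitz function `x ↦ ⟨φ, δ(x)⟩`.)  Then property (V*)
is compactly determined for `F(M)`: if `F(K ∪ {0})` has property (V*) for every compact
`K ⊆ M`, then `F(M)` has property (V*). -/
theorem propertyVStar_compactlyDetermined_of_wucExtension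
    {M : Type*} [MetricSpace M] [CompleteSpace M] (o : M)
    {F : Type*} [NormedAddCommGroup F] [NormedSpace ℝ F] [CompleteSpace F]
    (δ : M → F) (hδ : IsLipschitzFree o δ)
    (hext : ∀ K : Set M, IsCompact K → o ∈ K →
      ∀ f : ℕ → (↥(freeSpan δ K) →L[ℝ] ℝ), IsWUC f →
        ∃ g : ℕ → (F →L[ℝ] ℝ), IsWUC g ∧
          ∀ n : ℕ, ∀ x : M, ∀ hx : x ∈ K,
            g n (δ x) = f n ⟨δ x, mem_freeSpan δ hx⟩)
    (hcpt : ∀ K : Set M, IsCompact K → HasPropertyVStar ↥(freeSpan δ (K ∪ {o}))) :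
    HasPropertyVStar F := by
  intro Γ hΓ
  refine RelWeaklyCompact.of_approx fun ε hε => ?_
  obtain ⟨K, hK, hoK, A, hA, hAK, hΓA⟩ := hδ.exists_isCompact_subset_thickening hΓ hε
  refine ⟨A, ?_, hΓA⟩
  have hK_union : K ∪ {o} = K := union_eq_left.2 (singleton_subset_iff.2 hoK)
  have hV : HasPropertyVStar (freeSpan δ K) := hK_union ▸ hcpt K hK
  have hAV : IsVStarSet ((↑) ⁻¹' A : Set (freeSpan δ K)) := hA.preimage_subtype fun f hf => by
    obtain ⟨g, hg, hgf⟩ := hext K hK hoK f hf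
    exact ⟨g, hg, fun n => clm_apply_eq_of_forall_mem (hgf n)⟩
  have hA_image : (freeSpan δ K).subtypeL '' ((↑) ⁻¹' A) = A :=
    (Subtype.image_preimage_coe _ _).trans (inter_eq_right.2 hAK)
  exact hA_image ▸ (hV _ hAV).image (freeSpan δ K).subtypeL
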